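/- Let n = 2m be even and let S ⊆ D_n be either S = b⟨a²⟩ = {b a^{2k} : 0 ≤ k ≤ m−1} or S = ba⟨a²⟩ = {b a^{2k+1} : 0 ≤ k ≤ m−1}. Then Cay(D_n, S) exhibits PST (i.e., PST occurs between some pair of distinct vertices at some positive time) if and only if n ∈ {2, 4}. -/

import Mathlib

/-!
The connection set is the fibre of the reduction `D_n → D_2` over a reflection; more generally, for
`d ∣ n` the coset `b a^e ⟨a^d⟩` is the fibre of `D_n → D_d` over the involution `b a^e`. For any
homomorphism `φ` from a finite group, let `P_s` be the discriminant matrix of the Cayley graph on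
the fibre of `φ` through `s`. Counting fibres gives `P_s P_t = P_{st}`, so `φ(s)² = 1` makes
`P_s² = P_1` idempotent and `P_s³ = P_s`. The Chebyshev recurrence then allows only the values `1`,
`P_s` and `2 P_s² - 1 = 2 P_1 - 1` for `T_τ(P_s)`. Their off-diagonal entries are `0`, `1/c` or
`2/c`, where `c = |ker φ|` is the size of a fibre, so state transfer between distinct vertices
forces `c = 1` or `c = 2`; in these cases `T_1(P_s) = P_s`, respectively `T_2(P_s) = 2 P_1 - 1`, is
the permutation matrix of a translation.
-/

open Polynomial Matrix

noncomputable section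

namespace PaperPST

/-! ### Grover-walk PST data for Cayley graphs over a general finite group -/

/-- The adjacency matrix of the Cayley graph `Cay(Γ, S)`: `A u v = 1` iff `u * v⁻¹ ∈ S`. -/
def adjG (Γ : Type*) [Group Γ] [Fintype Γ] [DecidableEq Γ] (S : Finset Γ) : Matrix Γ Γ ℂ :=
  Matrix.of fun u v => if u * v⁻¹ ∈ S then 1 else 0

/-- The discriminant matrix `P = (1/|S|) A` of `Cay(Γ, S)`. -/
def discG (Γ : Type*) [Group Γ] [Fintype Γ] [DecidableEq Γ] (S : Finset Γ) : Matrix Γ Γ ℂ :=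
  (S.card : ℂ)⁻¹ • adjG Γ S

/-- `T_τ(P)`, the `τ`-th Chebyshev polynomial of the first kind evaluated at the
discriminant matrix of `Cay(Γ, S)`. -/
def chebG (Γ : Type*) [Group Γ] [Fintype Γ] [DecidableEq Γ] (S : Finset Γ) (τ : ℕ) :
    Matrix Γ Γ ℂ :=
  Polynomial.aeval (discG Γ S) (Polynomial.Chebyshev.T ℂ τ)

/-- Perfect state transfer between vertices `u` and `v` of `Cay(Γ, S)` at time `τ`:
`T_τ(P) e_u = e_v`. -/
def PSTG (Γ : Type*) [Group Γ] [Fintype Γ] [DecidableEq Γ] (S : Finset Γ) (τ : ℕ)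
    (u v : Γ) : Prop :=
  chebG Γ S τ *ᵥ Pi.single u 1 = Pi.single v 1

/-- Evaluation of the `τ`-th Chebyshev polynomial of the first kind at a complex number. -/
def Teval (τ : ℕ) (x : ℂ) : ℂ := (Polynomial.Chebyshev.T ℂ τ).eval x

/-! ### Specialization to the dihedral group `D_n` -/

/-- Test whether an element of the dihedral group is a rotation `a^k`. -/
def isRot {n : ℕ} : DihedralGroup n → Bool
  | .r _ => true
  | .sr _ => false

/-- The adjacency matrix of the Cayley graph `Cay(D_n, S)`. -/
def adjC (n : ℕ) (S : Finset (DihedralGroup n)) :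
    Matrix (DihedralGroup n) (DihedralGroup n) ℂ :=
  Matrix.of fun u v => if u * v⁻¹ ∈ S then 1 else 0

/-- The discriminant matrix `P = (1/|S|) A` of `Cay(D_n, S)`. -/
def disc (n : ℕ) (S : Finset (DihedralGroup n)) :
    Matrix (DihedralGroup n) (DihedralGroup n) ℂ :=
  (S.card : ℂ)⁻¹ • adjC n S

/-- `T_τ(P)`, the `τ`-th Chebyshev polynomial of the first kind evaluated at the
discriminant matrix. -/
def chebP (n : ℕ) [NeZero n] (S : Finset (DihedralGroup n)) (τ : ℕ) :
    Matrix (DihedralGroup n) (DihedralGroup n) ℂ :=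
  Polynomial.aeval (disc n S) (Polynomial.Chebyshev.T ℂ τ)

/-- Perfect state transfer between vertices `u` and `v` of `Cay(D_n, S)` at time `τ`:
`T_τ(P) e_u = e_v`. -/
def PST (n : ℕ) [NeZero n] (S : Finset (DihedralGroup n)) (τ : ℕ)
    (u v : DihedralGroup n) : Prop :=
  chebP n S τ *ᵥ Pi.single u 1 = Pi.single v 1

/-- `ω = e^{2πi/n}`. -/
def omega (n : ℕ) : ℂ := Complex.exp (2 * Real.pi * Complex.I / n)

/-- `η_h(C) = Σ_{0 ≤ k ≤ n-1, a^k ∈ C} ω^{hk}`. -/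
def eta (n : ℕ) (h : ℕ) (C : Finset (DihedralGroup n)) : ℂ :=
  ∑ k ∈ Finset.range n, if DihedralGroup.r (k : ZMod n) ∈ C then omega n ^ (h * k) else 0

/-- `S_1 = S ∩ ⟨a⟩`. -/
def S1 (n : ℕ) (S : Finset (DihedralGroup n)) : Finset (DihedralGroup n) :=
  S.filter fun x => isRot x

/-- `S_2 = bS ∩ ⟨a⟩`, i.e. `{a^k : b a^k ∈ S}`. -/
def S2 (n : ℕ) (S : Finset (DihedralGroup n)) : Finset (DihedralGroup n) :=
  (S.image fun s => DihedralGroup.sr 0 * s).filter fun x => isRot x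

/-- `S_2⁻¹ = {s⁻¹ : s ∈ S_2}`. -/
def S2inv (n : ℕ) (S : Finset (DihedralGroup n)) : Finset (DihedralGroup n) :=
  (S2 n S).image fun x => x⁻¹

/-- The number of `a^k ∈ C` with `0 ≤ k ≤ n-1` and `k % 2 = p`. -/
def dcnt (n : ℕ) (C : Finset (DihedralGroup n)) (p : ℕ) : ℕ :=
  ((Finset.range n).filter fun k => k % 2 = p ∧ DihedralGroup.r (k : ZMod n) ∈ C).card

/-- Vertex labels `0, …, 2n-1`: label `u < n` is `a^u`, and label `n ≤ u < 2n` is `b a^{u-n}`. -/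
def lab (n : ℕ) (u : ℕ) : DihedralGroup n :=
  if u < n then DihedralGroup.r (u : ZMod n) else DihedralGroup.sr ((u - n : ℕ) : ZMod n)

/-- `Cay(D_n, S)` is a normal Cayley graph if `S` is closed under conjugation. -/
def IsNormalCay (n : ℕ) (S : Finset (DihedralGroup n)) : Prop :=
  ∀ g : DihedralGroup n, ∀ s ∈ S, g * s * g⁻¹ ∈ S

/-- `Cay(D_n, S)` exhibits PST at the minimum time `τ`. -/
def exhibitsMinPST (n : ℕ) [NeZero n] (S : Finset (DihedralGroup n)) (τ : ℕ) : Prop :=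
  (∃ u v : DihedralGroup n, u ≠ v ∧ PST n S τ u v) ∧
  ∀ σ : ℕ, 1 ≤ σ → σ < τ → ∀ u v : DihedralGroup n, u ≠ v → ¬ PST n S σ u v

/-! ### Eigenvector candidates -/

/-- The all-ones vector. -/
def w1 (n : ℕ) : DihedralGroup n → ℂ := fun _ => 1

/-- The vector which is `1` on `G_0` and `-1` on `G_1`. -/
def w2 (n : ℕ) : DihedralGroup n → ℂ
  | .r _ => 1
  | .sr _ => -1

/-- The vector with entry `(-1)^k` at `a^k` and `(-1)^k` at `b a^k`. -/
def w3 (n : ℕ) : DihedralGroup n → ℂ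
  | .r k => (-1) ^ k.val
  | .sr k => (-1) ^ k.val

/-- The vector with entry `(-1)^k` at `a^k` and `(-1)^{k+1}` at `b a^k`. -/
def w4 (n : ℕ) : DihedralGroup n → ℂ
  | .r k => (-1) ^ k.val
  | .sr k => (-1) ^ (k.val + 1)

/-- The vector with entry `ω^{hk}` at `a^k` and `0` at `b a^k`. -/
def uv1 (n h : ℕ) : DihedralGroup n → ℂ
  | .r k => omega n ^ (h * k.val)
  | .sr _ => 0

/-- The vector with entry `0` at `a^k` and `ω^{hk}` at `b a^k`. -/
def uv2 (n h : ℕ) : DihedralGroup n → ℂ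
  | .r _ => 0
  | .sr k => omega n ^ (h * k.val)

/-- The vector with entry `0` at `a^k` and `ω^{-hk}` at `b a^k`. -/
def uv3 (n h : ℕ) : DihedralGroup n → ℂ
  | .r _ => 0
  | .sr k => (omega n)⁻¹ ^ (h * k.val)

/-- The vector with entry `ω^{-hk}` at `a^k` and `0` at `b a^k`. -/
def uv4 (n h : ℕ) : DihedralGroup n → ℂ
  | .r k => (omega n)⁻¹ ^ (h * k.val)
  | .sr _ => 0

/-- The vector with entry `conj(ℓ)·ω^{hk}` at `a^k` and `ω^{hk}` at `b a^k`. -/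
def vv1 (n h : ℕ) (ℓ : ℂ) : DihedralGroup n → ℂ
  | .r k => (starRingEnd ℂ) ℓ * omega n ^ (h * k.val)
  | .sr k => omega n ^ (h * k.val)

/-- The vector with entry `ω^{-hk}` at `a^k` and `conj(ℓ)·ω^{-hk}` at `b a^k`. -/
def vv2 (n h : ℕ) (ℓ : ℂ) : DihedralGroup n → ℂ
  | .r k => (omega n)⁻¹ ^ (h * k.val)
  | .sr k => (starRingEnd ℂ) ℓ * (omega n)⁻¹ ^ (h * k.val)

/-- The vector with entry `-ω^{hk}` at `a^k` and `ℓ·ω^{hk}` at `b a^k`. -/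
def vv3 (n h : ℕ) (ℓ : ℂ) : DihedralGroup n → ℂ
  | .r k => -(omega n ^ (h * k.val))
  | .sr k => ℓ * omega n ^ (h * k.val)

/-- The vector with entry `ℓ·ω^{-hk}` at `a^k` and `-ω^{-hk}` at `b a^k`. -/
def vv4 (n h : ℕ) (ℓ : ℂ) : DihedralGroup n → ℂ
  | .r k => ℓ * (omega n)⁻¹ ^ (h * k.val)
  | .sr k => -((omega n)⁻¹ ^ (h * k.val))

section Chebyshev

variable {R A : Type*} [CommRing R] [Ring A] [Algebra R A] {x : A}

lemma aeval_chebyshev_T_add_two (x : A) (n : ℤ) :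
    aeval x (Chebyshev.T R (n + 2)) =
      2 * x * aeval x (Chebyshev.T R (n + 1)) - aeval x (Chebyshev.T R n) := by
  simp [Chebyshev.T_add_two, map_ofNat]

lemma aeval_chebyshev_T_two (x : A) : aeval x (Chebyshev.T R 2) = 2 * x ^ 2 - 1 := by
  simp [Chebyshev.T_two, map_ofNat]

lemma aeval_chebyshev_T_even_odd_of_cube_eq_self (hx : x ^ 3 = x) (k : ℕ) :
    (aeval x (Chebyshev.T R (2 * k)) = 1 ∨ aeval x (Chebyshev.T R (2 * k)) = 2 * x ^ 2 - 1) ∧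
      aeval x (Chebyshev.T R (2 * k + 1)) = x := by
  induction k with
  | zero => simp
  | succ k ih =>
    obtain ⟨h_even, h_odd⟩ := ih
    have next_even : aeval x (Chebyshev.T R (2 * (k + 1 : ℕ))) =
        2 * x ^ 2 - aeval x (Chebyshev.T R (2 * k)) := by
      rw [show (2 * (k + 1 : ℕ) : ℤ) = 2 * k + 2 by push_cast; ring, aeval_chebyshev_T_add_two,
        h_odd, mul_assoc, sq]
    have next_odd : aeval x (Chebyshev.T R (2 * (k + 1 : ℕ) + 1)) =
        2 * x * aeval x (Chebyshev.T R (2 * (k + 1 : ℕ))) - x := by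
      rw [show (2 * (k + 1 : ℕ) + 1 : ℤ) = 2 * k + 1 + 2 by push_cast; ring,
        aeval_chebyshev_T_add_two, h_odd,
        show (2 * k + 1 + 1 : ℤ) = 2 * (k + 1 : ℕ) by push_cast; ring]
    have mul_value : x * (2 * x ^ 2 - 1) = x := by
      calc x * (2 * x ^ 2 - 1) = 2 * x ^ 3 - x := by noncomm_ring
        _ = x := by rw [hx, two_mul, add_sub_cancel_right]
    rcases h_even with h_even | h_even <;> rw [next_odd, next_even, h_even]
    · exact ⟨.inr rfl, by rw [mul_assoc, mul_value, two_mul, add_sub_cancel_right]⟩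
    · exact ⟨.inl (sub_sub_cancel _ _),
        by rw [sub_sub_cancel, mul_one, two_mul, add_sub_cancel_right]⟩

lemma aeval_chebyshev_T_of_cube_eq_self (hx : x ^ 3 = x) (n : ℤ) :
    aeval x (Chebyshev.T R n) = 1 ∨ aeval x (Chebyshev.T R n) = x ∨
      aeval x (Chebyshev.T R n) = 2 * x ^ 2 - 1 := by
  rw [← Chebyshev.T_natAbs]
  obtain ⟨k, hk | hk⟩ := n.natAbs.even_or_odd' <;> rw [hk] <;> push_cast
  · exact (aeval_chebyshev_T_even_odd_of_cube_eq_self hx k).1.imp_right .inr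
  · exact .inr (.inl (aeval_chebyshev_T_even_odd_of_cube_eq_self hx k).2)

end Chebyshev

section CayleyGraph

variable {Γ : Type*} [Group Γ] [Fintype Γ] [DecidableEq Γ]

lemma discG_apply (S : Finset Γ) (u v : Γ) :
    discG Γ S u v = if u * v⁻¹ ∈ S then (S.card : ℂ)⁻¹ else 0 := by
  simp [discG, adjG]

lemma card_eq_of_mul_discG_apply_eq_one {S : Finset Γ} {u v : Γ} {a : ℂ}
    (h : a * discG Γ S u v = 1) : (S.card : ℂ) = a := by
  have hne : discG Γ S u v ≠ 0 := right_ne_zero_of_mul_eq_one h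
  rw [discG_apply] at h hne
  split_ifs at h hne with hmem
  · rw [eq_inv_of_mul_eq_one_left h, inv_inv]
  · exact absurd rfl hne

lemma PSTG_of_chebG_eq_discG_singleton {S : Finset Γ} {τ : ℕ} {g : Γ}
    (h : chebG Γ S τ = discG Γ {g}) (u : Γ) : PSTG Γ S τ u (g * u) := by
  ext w
  simp [h, discG_apply, Pi.single_apply, mul_inv_eq_iff_eq_mul]

lemma two_mul_discG_pair_sub_one {z : Γ} (hz : z ≠ 1) :
    2 * discG Γ {1, z} - 1 = discG Γ {z} := by
  ext u v
  rw [two_mul, Matrix.sub_apply, Matrix.add_apply, discG_apply, discG_apply,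
    Finset.card_pair hz.symm, Finset.card_singleton, Matrix.one_apply]
  by_cases huv : u = v
  · norm_num [huv, hz.symm]
  · by_cases hz' : u * v⁻¹ = z <;> norm_num [mul_inv_eq_one, huv, hz']

end CayleyGraph

section Fiber

variable {Γ Q : Type*} [Group Γ] [Fintype Γ] [Group Q] [DecidableEq Q]

/-- The fibre of `φ` through `s`, that is, the coset of `φ.ker` containing `s`. It is indexed by a
point of the domain so that it is never empty. -/
def fiber (φ : Γ →* Q) (s : Γ) : Finset Γ := {x | φ x = φ s}

variable (φ : Γ →* Q) {s : Γ}

@[simp]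
lemma mem_fiber {x : Γ} : x ∈ fiber φ s ↔ φ x = φ s := by simp [fiber]

lemma fiber_congr {t : Γ} (h : φ s = φ t) : fiber φ s = fiber φ t := by
  simp only [fiber, h]

lemma card_fiber_eq (s t : Γ) : (fiber φ s).card = (fiber φ t).card :=
  MonoidHom.card_fiber_eq_of_mem_range φ ⟨s, rfl⟩ ⟨t, rfl⟩

lemma card_fiber_ne_zero (s : Γ) : (fiber φ s).card ≠ 0 :=
  Finset.card_ne_zero_of_mem ((mem_fiber φ).2 rfl)

variable [DecidableEq Γ]

lemma discG_fiber_apply (s u v : Γ) :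
    discG Γ (fiber φ s) u v = if φ u = φ (s * v) then ((fiber φ 1).card : ℂ)⁻¹ else 0 := by
  simp only [discG_apply, mem_fiber, map_mul, map_inv, mul_inv_eq_iff_eq_mul, card_fiber_eq φ s 1]

lemma discG_fiber_mul (s t : Γ) :
    discG Γ (fiber φ s) * discG Γ (fiber φ t) = discG Γ (fiber φ (s * t)) := by
  ext u v
  set c : ℂ := ((fiber φ 1).card : ℂ)
  have hc : c ≠ 0 := Nat.cast_ne_zero.2 (card_fiber_ne_zero φ 1)
  have summand (w : Γ) : discG Γ (fiber φ s) u w * discG Γ (fiber φ t) w v =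
      if w ∈ fiber φ (t * v) then (if φ u = φ (s * t * v) then c⁻¹ * c⁻¹ else 0) else 0 := by
    simp only [discG_fiber_apply, mem_fiber, map_mul, mul_assoc]
    by_cases hw : φ w = φ t * φ v <;> simp [hw, c]
  calc (discG Γ (fiber φ s) * discG Γ (fiber φ t)) u v
      = c * if φ u = φ (s * t * v) then c⁻¹ * c⁻¹ else 0 := by
        simp only [Matrix.mul_apply, summand, Finset.sum_ite_mem, Finset.univ_inter,
          Finset.sum_const, nsmul_eq_mul, card_fiber_eq φ (t * v) 1, c]
    _ = discG Γ (fiber φ (s * t)) u v := by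
        rw [discG_fiber_apply, mul_ite, mul_inv_cancel_left₀ hc, mul_zero]

variable {φ}

lemma discG_fiber_sq (hs : φ (s * s) = 1) : discG Γ (fiber φ s) ^ 2 = discG Γ (fiber φ 1) := by
  rw [sq, discG_fiber_mul, fiber_congr φ (hs.trans φ.map_one.symm)]

lemma discG_fiber_cube (hs : φ (s * s) = 1) : discG Γ (fiber φ s) ^ 3 = discG Γ (fiber φ s) := by
  rw [pow_succ, discG_fiber_sq hs, discG_fiber_mul, one_mul]

lemma card_fiber_eq_one_or_two_of_PSTG (hs : φ (s * s) = 1) {τ : ℕ} {u v : Γ} (huv : u ≠ v)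
    (h : PSTG Γ (fiber φ s) τ u v) : (fiber φ s).card = 1 ∨ (fiber φ s).card = 2 := by
  have entry : chebG Γ (fiber φ s) τ v u = 1 := by
    simpa using congrFun h v
  rw [chebG] at entry
  rcases aeval_chebyshev_T_of_cube_eq_self (R := ℂ) (discG_fiber_cube hs) τ with hT | hT | hT <;>
    rw [hT] at entry
  · rw [Matrix.one_apply_ne huv.symm] at entry
    exact absurd entry zero_ne_one
  · left
    exact_mod_cast card_eq_of_mul_discG_apply_eq_one ((one_mul _).trans entry)
  · right
    rw [discG_fiber_sq hs, Matrix.sub_apply, Matrix.one_apply_ne huv.symm, sub_zero, two_mul,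
      Matrix.add_apply, ← two_mul] at entry
    rw [card_fiber_eq φ s 1]
    exact_mod_cast card_eq_of_mul_discG_apply_eq_one entry

lemma PSTG_fiber_of_card_eq_one (hcard : (fiber φ s).card = 1) (u : Γ) :
    PSTG Γ (fiber φ s) 1 u (s * u) := by
  have fiber_eq : {s} = fiber φ s :=
    Finset.eq_of_subset_of_card_le (by simp) (by simp [hcard])
  exact PSTG_of_chebG_eq_discG_singleton (by simp [chebG, ← fiber_eq]) u

lemma exists_PSTG_fiber_of_card_eq_two (hs : φ (s * s) = 1) (hcard : (fiber φ s).card = 2) :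
    ∃ z : Γ, z ≠ 1 ∧ ∀ u, PSTG Γ (fiber φ s) 2 u (z * u) := by
  rw [card_fiber_eq φ s 1] at hcard
  obtain ⟨z, hz_mem, hz⟩ := Finset.exists_mem_ne (hcard ▸ one_lt_two) 1
  have fiber_one_eq : {1, z} = fiber φ 1 :=
    Finset.eq_of_subset_of_card_le (by simpa [Finset.insert_subset_iff] using hz_mem)
      (by rw [hcard, Finset.card_pair hz.symm])
  refine ⟨z, hz, PSTG_of_chebG_eq_discG_singleton ?_⟩
  rw [chebG, Nat.cast_ofNat, aeval_chebyshev_T_two, discG_fiber_sq hs, ← fiber_one_eq,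
    two_mul_discG_pair_sub_one hz]

theorem exists_PSTG_fiber_iff (hs : φ s ≠ 1) (hs2 : φ (s * s) = 1) :
    (∃ τ : ℕ, 1 ≤ τ ∧ ∃ u v : Γ, u ≠ v ∧ PSTG Γ (fiber φ s) τ u v) ↔
      (fiber φ s).card = 1 ∨ (fiber φ s).card = 2 := by
  constructor
  · rintro ⟨τ, -, u, v, huv, h⟩
    exact card_fiber_eq_one_or_two_of_PSTG hs2 huv h
  · rintro (hcard | hcard)
    · have s_ne_one : s ≠ 1 := fun h => hs (by rw [h, map_one])
      exact ⟨1, le_rfl, 1, s * 1, by simpa using s_ne_one.symm,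
        PSTG_fiber_of_card_eq_one hcard 1⟩
    · obtain ⟨z, hz, h⟩ := exists_PSTG_fiber_of_card_eq_two hs2 hcard
      exact ⟨2, one_le_two, 1, z * 1, by simpa using hz.symm, h 1⟩

end Fiber

section Dihedral

variable {n d m : ℕ}

/-- For `d ∣ n`, the quotient homomorphism `D_n → D_n/⟨a^d⟩ ≅ D_d`, which reduces exponents of `a`
modulo `d`. -/
def dihedralCastHom (h : d ∣ n) : DihedralGroup n →* DihedralGroup d where
  toFun
    | .r i => .r (ZMod.castHom h (ZMod d) i)
    | .sr i => .sr (ZMod.castHom h (ZMod d) i)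
  map_one' := by simp only [DihedralGroup.one_def, map_zero]
  map_mul' := by
    rintro (i | i) (j | j) <;>
      simp only [DihedralGroup.r_mul_r, DihedralGroup.r_mul_sr, DihedralGroup.sr_mul_r,
        DihedralGroup.sr_mul_sr, map_add, map_sub]

lemma dihedralCastHom_r (h : d ∣ n) (i : ZMod n) :
    dihedralCastHom h (.r i) = .r (ZMod.castHom h (ZMod d) i) := rfl

lemma dihedralCastHom_sr (h : d ∣ n) (i : ZMod n) :
    dihedralCastHom h (.sr i) = .sr (ZMod.castHom h (ZMod d) i) := rfl

/-- The coset `b a^e ⟨a^d⟩` of reflections, listed as `b a^{dk+e}` for `0 ≤ k < m`; this is the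
whole coset when `n = d * m`. -/
def reflectionCoset (n d m e : ℕ) : Finset (DihedralGroup n) :=
  (Finset.range m).image fun k => .sr ((d * k + e : ℕ) : ZMod n)

lemma card_reflectionCoset [NeZero n] (hn : n = d * m) (e : ℕ) :
    (reflectionCoset n d m e).card = m := by
  subst hn
  rw [reflectionCoset, Finset.card_image_of_injOn, Finset.card_range]
  intro k hk l hl hkl
  have d_ne_zero : d ≠ 0 := left_ne_zero_of_mul (NeZero.ne (d * m))
  have modEq_mul : d * k ≡ d * l [MOD d * m] :=
    ((ZMod.natCast_eq_natCast_iff _ _ _).1 (DihedralGroup.sr.inj hkl)).add_right_cancel' e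
  have modEq : k ≡ l [MOD m] := modEq_mul.mul_left_cancel' d_ne_zero
  exact modEq.eq_of_lt_of_lt (Finset.mem_range.1 hk) (Finset.mem_range.1 hl)

lemma reflectionCoset_eq_fiber [NeZero n] (hn : n = d * m) (e : ℕ) :
    reflectionCoset n d m e =
      fiber (dihedralCastHom (Dvd.intro m hn.symm)) (.sr (e : ZMod n)) := by
  have h : d ∣ n := Dvd.intro m hn.symm
  ext (i | i)
  · simp [reflectionCoset, dihedralCastHom_r, dihedralCastHom_sr]
  · simp only [reflectionCoset, mem_fiber, dihedralCastHom_sr, Finset.mem_image, Finset.mem_range,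
      DihedralGroup.sr.injEq]
    constructor
    · rintro ⟨k, -, rfl⟩
      rw [map_natCast, map_natCast, Nat.cast_add, Nat.cast_mul, ZMod.natCast_self, zero_mul,
        zero_add]
    · intro hi
      have cast_sub : ((i - e).val : ZMod d) = 0 := by
        rw [← map_natCast (ZMod.castHom h (ZMod d)), ZMod.natCast_zmod_val, map_sub, hi, sub_self]
      obtain ⟨k, hk⟩ := (ZMod.natCast_eq_zero_iff _ _).1 cast_sub
      have k_lt : k < m := by
        refine Nat.lt_of_mul_lt_mul_left (a := d) ?_
        rw [← hk, ← hn]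
        exact ZMod.val_lt _
      refine ⟨k, k_lt, ?_⟩
      rw [← hk, Nat.cast_add, ZMod.natCast_zmod_val, sub_add_cancel]

end Dihedral

theorem stmt_18_general (n d m e : ℕ) [NeZero n] (hn : n = d * m) :
    (∃ τ : ℕ, 1 ≤ τ ∧ ∃ u v : DihedralGroup n, u ≠ v ∧ PST n (reflectionCoset n d m e) τ u v) ↔
      n = d ∨ n = 2 * d := by
  have d_ne_zero : d ≠ 0 := left_ne_zero_of_mul (hn ▸ NeZero.ne n)
  let φ := dihedralCastHom (Dvd.intro m hn.symm)
  let s : DihedralGroup n := .sr (e : ZMod n)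
  have map_s_ne_one : φ s ≠ 1 := nofun
  have s_sq : φ (s * s) = 1 := by rw [DihedralGroup.sr_mul_self, map_one]
  have pst_iff := exists_PSTG_fiber_iff map_s_ne_one s_sq
  rw [← reflectionCoset_eq_fiber hn, card_reflectionCoset hn] at pst_iff
  refine pst_iff.trans ?_
  rw [hn, mul_comm 2, Nat.mul_eq_left d_ne_zero, Nat.mul_right_inj d_ne_zero]

theorem stmt_18 (n m : ℕ) [NeZero n] (hnm : n = 2 * m)
    (S : Finset (DihedralGroup n))
    (hS : S = ((Finset.range m).image fun k => DihedralGroup.sr ((2 * k : ℕ) : ZMod n)) ∨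
          S = ((Finset.range m).image fun k => DihedralGroup.sr ((2 * k + 1 : ℕ) : ZMod n))) :
    (∃ τ : ℕ, 1 ≤ τ ∧ ∃ u v : DihedralGroup n, u ≠ v ∧ PST n S τ u v) ↔ n = 2 ∨ n = 4 := by
  rcases hS with rfl | rfl
  · exact stmt_18_general n 2 m 0 hnm
  · exact stmt_18_general n 2 m 1 hnm

end PaperPST
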